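/- arXiv:0806.0176 — 2 statements merged into one kernel-verified Lean document; each statement's English description precedes it below -/
import Mathlib

section
/- For finite subsets I, J, K of ℤ, there exists a surjective degree-zero C-module homomorphism Cx_I ⊕ Cx_J → Cx_K if and only if I ∩ J ⊆ K ⊆ I ∪ J. -/
open scoped symmDiff

noncomputable section

/-- The ring `C = k[x_n : n ∈ ℤ] / (x_n² + n = x_m² + m)`. -/
abbrev WeylC (k : Type) [Field k] : Type :=
  MvPolynomial ℤ k ⧸ Ideal.span { p : MvPolynomial ℤ k |
    ∃ m n : ℤ, p = MvPolynomial.X n ^ 2 + (n : MvPolynomial ℤ k)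
      - MvPolynomial.X m ^ 2 - (m : MvPolynomial ℤ k) }

variable (k : Type) [Field k]

/-- The generator `x_n` of `C`. -/
def xC (n : ℤ) : WeylC k := Ideal.Quotient.mk _ (MvPolynomial.X n)

/-- `x_I := ∏_{i ∈ I} x_i` for a finite subset `I ⊆ ℤ` (with `x_∅ = 1`). -/
def xS (I : Finset ℤ) : WeylC k := ∏ i ∈ I, xC k i

/-- The identity component `C_∅ = k[x_0²]`. -/
def Cphi : Subalgebra k (WeylC k) := Algebra.adjoin k {xC k 0 ^ 2}

/-- The homogeneous component `C_I = C_∅ · x_I` of the `ℤ_fin`-grading on `C`. -/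
def Cgrade (I : Finset ℤ) : Submodule k (WeylC k) :=
  (Cphi k).toSubmodule.map (LinearMap.mulRight k (xS k I))

/-- The graded ideal `Cx_I` generated by `x_I`. -/
def Cx (I : Finset ℤ) : Ideal (WeylC k) := Ideal.span {xS k I}

variable [CharZero k]

/-!
A degree-zero homomorphism `Cx_I → Cx_K` is multiplication by some `g ∈ C_∅ = k[x_n²]`. If `n ∈ I`,
then `x_n` divides all its values; if `n ∈ K \ I`, then `x_n ∣ g x_I` forces `x_n² ∣ g`. As `x_K`
is divisible by `x_n` only for `n ∈ K`, and never by `x_n²`, a pair of such maps can only be jointly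
surjective if `I ∩ J ⊆ K ⊆ I ∪ J`. Conversely, multiplication by `x_{K \ I}²` maps `Cx_I` onto
`x_{I ∆ K} Cx_K`, and under the two inclusions `I ∆ K` and `J ∆ K` are disjoint, which makes
`x_{I ∆ K}` and `x_{J ∆ K}` coprime.
-/

theorem disjoint_symmDiff_symmDiff_iff {α : Type*} [GeneralizedBooleanAlgebra α] {a b c : α} :
    Disjoint (a ∆ c) (b ∆ c) ↔ a ⊓ b ≤ c ∧ c ≤ a ⊔ b := by
  have h₁ : Disjoint (a \ c) (b \ c) ↔ a ⊓ b ≤ c := by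
    rw [disjoint_iff, ← inf_sdiff, sdiff_eq_bot_iff]
  have h₂ : Disjoint (c \ a) (c \ b) ↔ c ≤ a ⊔ b := by
    rw [disjoint_iff, ← sdiff_sup, sdiff_eq_bot_iff]
  have h₃ : Disjoint (a \ c) (c \ b) := disjoint_sdiff_self_left.mono_right sdiff_le
  have h₄ : Disjoint (c \ a) (b \ c) := disjoint_sdiff_self_right.mono_left sdiff_le
  simp only [symmDiff_def, disjoint_sup_left, disjoint_sup_right, h₁, h₂, h₃, h₄, and_true,
    true_and]

namespace WeylC

variable {F : Type} [Field F] {I J K : Finset ℤ} {n : ℤ}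

theorem xC_sq_add (m n : ℤ) : xC F n ^ 2 + n = xC F m ^ 2 + m := by
  have h : (Ideal.Quotient.mk _ (MvPolynomial.X n ^ 2 + (n : MvPolynomial ℤ F)
      - MvPolynomial.X m ^ 2 - (m : MvPolynomial ℤ F)) : WeylC F) = 0 :=
    Ideal.Quotient.eq_zero_iff_mem.2 (Ideal.subset_span ⟨m, n, rfl⟩)
  simp only [map_sub, map_add, map_pow, map_intCast] at h
  unfold xC
  linear_combination h

/-- The universal property of `C`: a solution `s` of the defining relations in an algebra `A`
extends to a homomorphism `C → A` sending `x_n` to `s n`. -/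
def lift {A : Type*} [CommRing A] [Algebra F A] (s : ℤ → A)
    (hs : ∀ m n : ℤ, s n ^ 2 + n = s m ^ 2 + m) : WeylC F →ₐ[F] A :=
  Ideal.Quotient.liftₐ _ (MvPolynomial.aeval s) <| by
    suffices h : Ideal.span _ ≤ RingHom.ker (MvPolynomial.aeval (R := F) s) from fun _ ha => h ha
    rw [Ideal.span_le]
    rintro _ ⟨m, n, rfl⟩
    simp only [SetLike.mem_coe, RingHom.mem_ker, map_sub, map_add, map_pow, map_intCast,
      MvPolynomial.aeval_X]
    linear_combination hs m n

@[simp]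
theorem lift_xC {A : Type*} [CommRing A] [Algebra F A] (s : ℤ → A)
    (hs : ∀ m n : ℤ, s n ^ 2 + n = s m ^ 2 + m) (n : ℤ) : lift s hs (xC F n) = s n :=
  MvPolynomial.aeval_X s n

open DualNumber in
theorem exists_algHom_xC_eq_eps (n : ℤ) :
    ∃ φ : WeylC F →ₐ[F] (AlgebraicClosure F)[ε], φ (xC F n) = ε := by
  -- As `ε² = 0`, sending the other `x_m` to square roots of `n - m` gives every `x_m² + m` the
  -- value `n`.
  have h_root : ∀ m : ℤ, ∃ t : AlgebraicClosure F, t ^ 2 = ((n - m : ℤ) : AlgebraicClosure F) :=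
    fun m => IsAlgClosed.exists_pow_nat_eq _ two_pos
  choose t ht using h_root
  let s : ℤ → (AlgebraicClosure F)[ε] := Function.update (fun m => algebraMap _ _ (t m)) n ε
  have hs (m : ℤ) : s m ^ 2 = ((n - m : ℤ) : (AlgebraicClosure F)[ε]) := by
    obtain rfl | hm := eq_or_ne m n
    · simp [s]
    · simp only [s, Function.update_of_ne hm, ← map_pow, ht, map_intCast]
  refine ⟨lift s fun m l => ?_, by simp [s]⟩
  rw [hs, hs]
  push_cast
  ring

theorem not_xC_sq_dvd_xC (n : ℤ) : ¬ xC F n ^ 2 ∣ xC F n := by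
  rintro ⟨c, hc⟩
  obtain ⟨φ, hφ⟩ := exists_algHom_xC_eq_eps (F := F) n
  have h_eps : φ (xC F n) = 0 := by
    rw [hc, map_mul, map_pow, hφ, DualNumber.eps_pow_two, zero_mul]
  simpa [hφ] using congrArg TrivSqZeroExt.snd h_eps

section Coprime

variable [CharZero F]

theorem isCoprime_xC {m n : ℤ} (h : m ≠ n) : IsCoprime (xC F m) (xC F n) := by
  have h_unit : IsUnit ((n - m : ℤ) : WeylC F) := by
    have : ((n - m : ℤ) : F) ≠ 0 := Int.cast_ne_zero.2 (sub_ne_zero.2 h.symm)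
    simpa only [map_intCast] using (IsUnit.mk0 _ this).map (algebraMap F (WeylC F))
  have h_sq : xC F m ^ 2 = ((n - m : ℤ) : WeylC F) + xC F n ^ 2 * 1 := by
    push_cast
    linear_combination xC_sq_add (F := F) n m
  rw [← IsCoprime.pow_iff two_pos two_pos, h_sq, IsCoprime.add_mul_left_left_iff]
  exact isCoprime_one_left.of_isCoprime_of_dvd_left h_unit.dvd

theorem isCoprime_xC_xS (h : n ∉ I) : IsCoprime (xC F n) (xS F I) :=
  IsCoprime.prod_right fun _ hi => isCoprime_xC (ne_of_mem_of_not_mem hi h).symm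

theorem isCoprime_xS (h : Disjoint I J) : IsCoprime (xS F I) (xS F J) :=
  IsCoprime.prod_left fun _ hi => isCoprime_xC_xS (Finset.disjoint_left.1 h hi)

end Coprime

theorem xS_dvd_xS (h : I ⊆ J) : xS F I ∣ xS F J :=
  Finset.prod_dvd_prod_of_subset _ _ _ h

theorem xC_dvd_xS (h : n ∈ I) : xC F n ∣ xS F I :=
  Finset.dvd_prod_of_mem _ h

theorem xC_mul_xS (h : n ∉ I) : xC F n * xS F I = xS F (insert n I) :=
  (Finset.prod_insert h).symm

theorem not_xC_sq_dvd_xS [CharZero F] (n : ℤ) (I : Finset ℤ) : ¬ xC F n ^ 2 ∣ xS F I := by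
  intro h
  have h_dvd : xC F n ^ 2 ∣ xC F n * xS F (I.erase n) := by
    rw [xC_mul_xS (I.notMem_erase n)]
    exact h.trans (xS_dvd_xS (Finset.subset_insert_iff.2 subset_rfl))
  exact not_xC_sq_dvd_xC n
    ((isCoprime_xC_xS (I.notMem_erase n)).pow_left.dvd_of_dvd_mul_right h_dvd)

theorem xC_dvd_xS_iff [CharZero F] : xC F n ∣ xS F I ↔ n ∈ I := by
  refine ⟨fun h => ?_, xC_dvd_xS⟩
  by_contra hn
  apply not_xC_sq_dvd_xS (F := F) n (insert n I)
  rw [← xC_mul_xS hn, sq]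
  exact mul_dvd_mul_left _ h

theorem xC_sq_mem_Cphi (n : ℤ) : xC F n ^ 2 ∈ Cphi F := by
  have h_sq : xC F n ^ 2 = xC F 0 ^ 2 - n := by
    simpa [eq_sub_iff_add_eq] using xC_sq_add (F := F) 0 n
  rw [h_sq]
  exact sub_mem (Algebra.subset_adjoin rfl) (intCast_mem _ _)

theorem xS_sq_mem_Cphi (I : Finset ℤ) : xS F I ^ 2 ∈ Cphi F := by
  rw [xS, ← Finset.prod_pow]
  exact prod_mem fun i _ => xC_sq_mem_Cphi i

theorem exists_xC_sq_dvd_sub_algebraMap (n : ℤ) {g : WeylC F} (hg : g ∈ Cphi F) :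
    ∃ a : F, xC F n ^ 2 ∣ g - algebraMap F (WeylC F) a := by
  induction hg using Algebra.adjoin_induction with
  | mem x hx =>
    obtain rfl := Set.mem_singleton_iff.1 hx
    refine ⟨n, dvd_of_eq ?_⟩
    simpa [eq_sub_iff_add_eq] using xC_sq_add (F := F) 0 n
  | algebraMap a => exact ⟨a, by simp⟩
  | add g h _ _ hg hh =>
    obtain ⟨a, ha⟩ := hg
    obtain ⟨b, hb⟩ := hh
    refine ⟨a + b, ?_⟩
    rw [map_add, add_sub_add_comm]
    exact dvd_add ha hb
  | mul g h _ _ hg hh =>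
    obtain ⟨a, ha⟩ := hg
    obtain ⟨b, hb⟩ := hh
    refine ⟨a * b, ?_⟩
    have h_split : g * h - algebraMap F (WeylC F) (a * b)
        = g * (h - algebraMap F _ b) + (g - algebraMap F _ a) * algebraMap F _ b := by
      rw [map_mul]
      ring
    rw [h_split]
    exact dvd_add (hb.mul_left _) (ha.mul_right _)

theorem xC_sq_dvd_of_xC_dvd_mul_xS [CharZero F] {g : WeylC F} (hg : g ∈ Cphi F)
    (h : xC F n ∣ g * xS F I) (hn : n ∉ I) : xC F n ^ 2 ∣ g := by
  obtain ⟨a, ha⟩ := exists_xC_sq_dvd_sub_algebraMap n hg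
  suffices a = 0 by simpa [this] using ha
  by_contra ha₀
  have h_unit : IsUnit (algebraMap F (WeylC F) a) := (IsUnit.mk0 a ha₀).map _
  have h_sub : xC F n ∣ (g - algebraMap F (WeylC F) a) * xS F I :=
    ((dvd_pow_self _ two_ne_zero).trans ha).mul_right _
  have h_const : xC F n ∣ algebraMap F (WeylC F) a * xS F I := by
    simpa [sub_mul] using dvd_sub h h_sub
  exact hn (xC_dvd_xS_iff.1 (h_unit.dvd_mul_left.1 h_const))

theorem xS_mem_Cgrade (I : Finset ℤ) : xS F I ∈ Cgrade F I :=
  ⟨1, one_mem (Cphi F), one_mul _⟩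

theorem mul_mem_Cgrade {g u : WeylC F} (hg : g ∈ Cphi F) (hu : u ∈ Cgrade F I) :
    g * u ∈ Cgrade F I := by
  obtain ⟨h, hh, rfl⟩ := hu
  exact ⟨g * h, mul_mem (S := Subalgebra F (WeylC F)) hg hh, mul_assoc g h _⟩

theorem mem_Cx {u : WeylC F} : u ∈ Cx F I ↔ xS F I ∣ u :=
  Ideal.mem_span_singleton

theorem xS_mem_Cx (I : Finset ℤ) : xS F I ∈ Cx F I :=
  Ideal.mem_span_singleton_self _

/-- A `C`-linear map `Cx_I → Cx_K` has degree zero if it preserves each homogeneous component of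
the `ℤ_fin`-grading. -/
def IsDegreeZero (f : Cx F I →ₗ[WeylC F] Cx F K) : Prop :=
  ∀ (L : Finset ℤ) (u : Cx F I), (u : WeylC F) ∈ Cgrade F L → (f u : WeylC F) ∈ Cgrade F L

theorem forall_coprod_mem_Cgrade_iff {f₁ : Cx F I →ₗ[WeylC F] Cx F K}
    {f₂ : Cx F J →ₗ[WeylC F] Cx F K} :
    (∀ (L : Finset ℤ) (p : Cx F I × Cx F J), (p.1 : WeylC F) ∈ Cgrade F L →
      (p.2 : WeylC F) ∈ Cgrade F L → (f₁.coprod f₂ p : WeylC F) ∈ Cgrade F L) ↔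
    IsDegreeZero f₁ ∧ IsDegreeZero f₂ := by
  refine ⟨fun h => ⟨fun L u hu => ?_, fun L v hv => ?_⟩, fun ⟨h₁, h₂⟩ L p hu hv => ?_⟩
  · simpa using h L (u, 0) hu (zero_mem _)
  · simpa using h L (0, v) (zero_mem _) hv
  · exact add_mem (h₁ L p.1 hu) (h₂ L p.2 hv)

namespace IsDegreeZero

variable {f : Cx F I →ₗ[WeylC F] Cx F K} {f₁ : Cx F I →ₗ[WeylC F] Cx F K}
  {f₂ : Cx F J →ₗ[WeylC F] Cx F K}

theorem exists_eq_mul (hf : IsDegreeZero f) :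
    ∃ g ∈ Cphi F, ∀ u, (f u : WeylC F) = g * u := by
  obtain ⟨g, hg, hgf⟩ := hf I ⟨xS F I, xS_mem_Cx I⟩ (xS_mem_Cgrade I)
  refine ⟨g, hg, fun ⟨u, hu⟩ => ?_⟩
  obtain ⟨c, rfl⟩ := Ideal.mem_span_singleton'.1 hu
  calc (f ⟨c * xS F I, hu⟩ : WeylC F)
      = (f (c • ⟨xS F I, xS_mem_Cx I⟩) : WeylC F) := rfl
    _ = c * f ⟨xS F I, xS_mem_Cx I⟩ := by rw [map_smul]; rfl
    _ = c * (g * xS F I) := by rw [← hgf]; rfl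
    _ = g * (c * xS F I) := mul_left_comm _ _ _

theorem xC_dvd_apply (hf : IsDegreeZero f) (hn : n ∈ I) (u : Cx F I) :
    xC F n ∣ (f u : WeylC F) := by
  obtain ⟨g, -, hgf⟩ := hf.exists_eq_mul
  rw [hgf]
  exact ((xC_dvd_xS hn).trans (mem_Cx.1 u.2)).mul_left g

theorem xC_sq_dvd_apply [CharZero F] (hf : IsDegreeZero f) (hK : n ∈ K) (hI : n ∉ I)
    (u : Cx F I) : xC F n ^ 2 ∣ (f u : WeylC F) := by
  obtain ⟨g, hg, hgf⟩ := hf.exists_eq_mul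
  have h_dvd : xC F n ∣ g * xS F I := by
    rw [← hgf ⟨xS F I, xS_mem_Cx I⟩]
    exact (xC_dvd_xS hK).trans (mem_Cx.1 (f _).2)
  rw [hgf]
  exact (xC_sq_dvd_of_xC_dvd_mul_xS hg h_dvd hI).mul_right u

theorem inter_subset [CharZero F] (h₁ : IsDegreeZero f₁) (h₂ : IsDegreeZero f₂)
    (hf : Function.Surjective (f₁.coprod f₂)) : I ∩ J ⊆ K := by
  intro n hn
  obtain ⟨hI, hJ⟩ := Finset.mem_inter.1 hn
  obtain ⟨⟨u, v⟩, huv⟩ := hf ⟨xS F K, xS_mem_Cx K⟩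
  have h_sum : (f₁ u + f₂ v : WeylC F) = xS F K := congrArg Subtype.val huv
  rw [← xC_dvd_xS_iff (F := F), ← h_sum]
  exact dvd_add (h₁.xC_dvd_apply hI u) (h₂.xC_dvd_apply hJ v)

theorem subset_union [CharZero F] (h₁ : IsDegreeZero f₁) (h₂ : IsDegreeZero f₂)
    (hf : Function.Surjective (f₁.coprod f₂)) : K ⊆ I ∪ J := by
  intro n hK
  by_contra hn
  obtain ⟨hI, hJ⟩ := Finset.notMem_union.1 hn
  obtain ⟨⟨u, v⟩, huv⟩ := hf ⟨xS F K, xS_mem_Cx K⟩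
  have h_sum : (f₁ u + f₂ v : WeylC F) = xS F K := congrArg Subtype.val huv
  apply not_xC_sq_dvd_xS (F := F) n K
  rw [← h_sum]
  exact dvd_add (h₁.xC_sq_dvd_apply hK hI u) (h₂.xC_sq_dvd_apply hK hJ v)

end IsDegreeZero

theorem xS_sdiff_sq_mul_xS (I K : Finset ℤ) :
    xS F (K \ I) ^ 2 * xS F I = xS F (I ∆ K) * xS F K := by
  have h_union : xS F (K \ I) * xS F I = xS F (I \ K) * xS F K := by
    simp only [xS, ← Finset.prod_union Finset.sdiff_disjoint, Finset.sdiff_union_self_eq_union,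
      Finset.union_comm I]
  have h_symmDiff : xS F (I ∆ K) = xS F (I \ K) * xS F (K \ I) :=
    Finset.prod_union disjoint_sdiff_sdiff
  rw [h_symmDiff]
  linear_combination xS F (K \ I) * h_union

/-- Multiplication by `x_{K \ I}²` as a map `Cx_I → Cx_K`; the square makes it of degree zero. -/
def sdiffSqMul (I K : Finset ℤ) : Cx F I →ₗ[WeylC F] Cx F K :=
  (LinearMap.mulLeft (WeylC F) (xS F (K \ I) ^ 2)).restrict fun u hu => by
    have h_dvd : xS F K ∣ xS F (K \ I) ^ 2 * xS F I :=
      ⟨xS F (I ∆ K), by rw [xS_sdiff_sq_mul_xS, mul_comm]⟩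
    exact mem_Cx.2 (h_dvd.trans (mul_dvd_mul_left _ (mem_Cx.1 hu)))

@[simp]
theorem coe_sdiffSqMul (I K : Finset ℤ) (u : Cx F I) :
    (sdiffSqMul I K u : WeylC F) = xS F (K \ I) ^ 2 * u :=
  rfl

theorem isDegreeZero_sdiffSqMul (I K : Finset ℤ) : IsDegreeZero (sdiffSqMul (F := F) I K) :=
  fun _ _ hu => mul_mem_Cgrade (xS_sq_mem_Cphi _) hu

theorem surjective_coprod_sdiffSqMul [CharZero F] (h : Disjoint (I ∆ K) (J ∆ K)) :
    Function.Surjective ((sdiffSqMul (F := F) I K).coprod (sdiffSqMul J K)) := by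
  rintro ⟨w, hw⟩
  obtain ⟨c, rfl⟩ := Ideal.mem_span_singleton'.1 hw
  obtain ⟨a, b, hab⟩ := isCoprime_xS (F := F) h
  refine ⟨((c * a) • ⟨xS F I, xS_mem_Cx I⟩, (c * b) • ⟨xS F J, xS_mem_Cx J⟩), Subtype.ext ?_⟩
  calc xS F (K \ I) ^ 2 * (c * a * xS F I) + xS F (K \ J) ^ 2 * (c * b * xS F J)
      = c * a * (xS F (K \ I) ^ 2 * xS F I) + c * b * (xS F (K \ J) ^ 2 * xS F J) := by ring
    _ = c * (a * xS F (I ∆ K) + b * xS F (J ∆ K)) * xS F K := by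
      rw [xS_sdiff_sq_mul_xS, xS_sdiff_sq_mul_xS]; ring
    _ = c * xS F K := by rw [hab, mul_one]

end WeylC

/-- There exists a surjective degree-zero (i.e. degree-preserving)
`C`-module homomorphism `Cx_I ⊕ Cx_J → Cx_K` if and only if `I ∩ J ⊆ K ⊆ I ∪ J`. -/
theorem cx_surjection_iff (I J K : Finset ℤ) :
    (∃ f : (↥(Cx k I) × ↥(Cx k J)) →ₗ[WeylC k] ↥(Cx k K),
      Function.Surjective f ∧
      ∀ (L : Finset ℤ) (p : ↥(Cx k I) × ↥(Cx k J)),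
        (p.1 : WeylC k) ∈ Cgrade k L → (p.2 : WeylC k) ∈ Cgrade k L →
        (f p : WeylC k) ∈ Cgrade k L) ↔
    I ∩ J ⊆ K ∧ K ⊆ I ∪ J := by
  constructor
  · rintro ⟨f, hf, hdeg⟩
    obtain ⟨⟨f₁, f₂⟩, rfl⟩ := (LinearMap.coprodEquiv (WeylC k)).surjective f
    obtain ⟨h₁, h₂⟩ := WeylC.forall_coprod_mem_Cgrade_iff.1 hdeg
    exact ⟨h₁.inter_subset h₂ hf, h₁.subset_union h₂ hf⟩
  · intro h
    exact ⟨(WeylC.sdiffSqMul I K).coprod (WeylC.sdiffSqMul J K),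
      WeylC.surjective_coprod_sdiffSqMul (disjoint_symmDiff_symmDiff_iff.2 h),
      WeylC.forall_coprod_mem_Cgrade_iff.2
        ⟨WeylC.isDegreeZero_sdiffSqMul I K, WeylC.isDegreeZero_sdiffSqMul J K⟩⟩
end
end

section
/- For finite subsets I, J, I', J' of ℤ, Cx_I ⊕ Cx_J ≅ Cx_{I'} ⊕ Cx_{J'} as graded C-modules if and only if I ∪ J = I' ∪ J' and I ∩ J = I' ∩ J'. -/
open scoped symmDiff

noncomputable section

variable (k : Type) [Field k]

variable [CharZero k]

/-!
The identity component `C_∅ = k[x_0²]` is a polynomial ring, and `x_n² = x_0² - n`. Graded maps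
between direct sums of the modules `Cx_I` are therefore matrices over `k[X]`, where multiplication
by `g` maps `Cx_I` into `Cx_J` if and only if `∏_{i ∈ J \ I} (X - i)` divides `g`. So a graded
isomorphism is a pair of mutually inverse matrices whose entries are divisible by prescribed
polynomials.

Evaluating such a matrix at `X = i` gives an invertible matrix with a zero block, which makes
`#{s | i ∉ I_s}` an invariant of `⨁ Cx_{I_s}`; for a pair it determines the union and the
intersection. Conversely, if these agree, then the product of the factors prescribed on the diagonal
is coprime to the product of those on the antidiagonal, and Bézout coefficients yield a matrix of
determinant `1`.
-/

open Polynomial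

section FinsetPairs

variable {α : Type*} [DecidableEq α] {I J I' J' : Finset α}

lemma sdiff_eq_sdiff_of_union_eq_of_inter_eq (hU : I ∪ J = I' ∪ J') (hN : I ∩ J = I' ∩ J') :
    I \ I' = J' \ J := by
  ext i
  have hUi := Finset.ext_iff.1 hU i
  have hNi := Finset.ext_iff.1 hN i
  grind

lemma disjoint_sdiff_sdiff_of_subset_union (h : I' ⊆ I ∪ J) : Disjoint (I' \ I) (I' \ J) := by
  rw [Finset.disjoint_left]
  grind

lemma disjoint_sdiff_sdiff_of_inter_subset (h : I' ∩ J' ⊆ I) : Disjoint (I' \ I) (J' \ I) := by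
  rw [Finset.disjoint_left]
  grind

lemma union_eq_and_inter_eq_of_card_notMem_eq
    (h : ∀ i, Fintype.card {s // i ∉ ![I, J] s} = Fintype.card {s // i ∉ ![I', J'] s}) :
    I ∪ J = I' ∪ J' ∧ I ∩ J = I' ∩ J' := by
  simp only [Fintype.card_subtype, Finset.card_filter, Fin.sum_univ_two, Matrix.cons_val_zero,
    Matrix.cons_val_one] at h
  constructor <;> ext i <;> have hi := h i <;> grind

end FinsetPairs

-- `N * M = 1` restricts to the block of `M` on `p × q`, which is therefore still left invertible.
lemma card_subtype_le_of_mul_eq_one {R m n : Type*} [CommRing R] [Nontrivial R] [Fintype m]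
    [Fintype n] [DecidableEq n] {M : Matrix m n R} {N : Matrix n m R} (hNM : N * M = 1)
    {p : n → Prop} {q : m → Prop} [DecidablePred p] [DecidablePred q]
    (hM : ∀ t s, ¬ q t → p s → M t s = 0) :
    Fintype.card {s // p s} ≤ Fintype.card {t // q t} := by
  have hzero : M.toBlock (fun t => ¬ q t) p = 0 := by
    ext t s
    exact hM t s t.2 s.2
  have hblock : N.toBlock p q * M.toBlock q p = 1 := by
    rw [← Matrix.toBlock_one_self, ← hNM, Matrix.toBlock_mul_eq_add p q, hzero,
      Matrix.mul_zero, add_zero]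
  calc
    Fintype.card {s // p s} = (N.toBlock p q * M.toBlock q p).rank := by
      rw [hblock, Matrix.rank_one]
    _ ≤ (N.toBlock p q).rank := Matrix.rank_mul_le_left _ _
    _ ≤ Fintype.card {t // q t} := Matrix.rank_le_card_width _

-- Bézout coefficients scale the prescribed factors to a matrix of determinant `1`.
lemma exists_mul_eq_one_and_dvd_of_isCoprime {R : Type*} [CommRing R] {a b c d : R}
    (h : IsCoprime (a * d) (b * c)) :
    ∃ M N : Matrix (Fin 2) (Fin 2) R, M * N = 1 ∧ N * M = 1 ∧
      (∀ t s, !![a, b; c, d] t s ∣ M t s) ∧ ∀ s t, !![d, b; c, a] s t ∣ N s t := by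
  obtain ⟨u, v, huv⟩ := h
  have hdet : !![u * a, -(v * b); c, d].det = 1 := by
    rw [Matrix.det_fin_two_of]
    linear_combination huv
  refine ⟨!![u * a, -(v * b); c, d], Matrix.adjugate !![u * a, -(v * b); c, d], ?_, ?_, ?_, ?_⟩
  · rw [Matrix.mul_adjugate, hdet, one_smul]
  · rw [Matrix.adjugate_mul, hdet, one_smul]
  · simp [Fin.forall_fin_two]
  · simp [Fin.forall_fin_two, Matrix.adjugate_fin_two_of]

/-- The monic polynomial `∏_{i ∈ S} (X - i)`; under `X ↦ x_0²` it becomes `x_S²`. -/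
def intRootsPoly (S : Finset ℤ) : k[X] := ∏ i ∈ S, (X - C (i : k))

section IntRootsPoly

variable {k}

omit [CharZero k] in
lemma eval_eq_zero_of_intRootsPoly_dvd {S : Finset ℤ} {i : ℤ} (hi : i ∈ S) {g : k[X]}
    (hg : intRootsPoly k S ∣ g) : g.eval (i : k) = 0 :=
  dvd_iff_isRoot.1 ((Finset.dvd_prod_of_mem (fun i : ℤ => X - C (i : k)) hi).trans hg)

lemma intRootsPoly_dvd_of_eval_eq_zero {S : Finset ℤ} {g : k[X]}
    (hg : ∀ i ∈ S, g.eval (i : k) = 0) : intRootsPoly k S ∣ g :=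
  Finset.prod_dvd_of_coprime ((pairwise_coprime_X_sub_C Int.cast_injective).set_pairwise _)
    fun i hi => dvd_iff_isRoot.2 (hg i hi)

lemma isCoprime_intRootsPoly {S T : Finset ℤ} (h : Disjoint S T) :
    IsCoprime (intRootsPoly k S) (intRootsPoly k T) :=
  IsCoprime.prod_left fun _ hi => IsCoprime.prod_right fun _ hj =>
    pairwise_coprime_X_sub_C Int.cast_injective (Finset.disjoint_left.1 h hi <| · ▸ hj)

end IntRootsPoly

/-- The parametrisation `g ↦ g(x_0²)` of the identity component `C_∅` by polynomials. -/
def polyC : k[X] →ₐ[k] WeylC k := aeval (xC k 0 ^ 2)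

section WeylC

omit [CharZero k]

lemma xC_sq (n : ℤ) : xC k n ^ 2 = xC k 0 ^ 2 - n := by
  have hrel : Ideal.Quotient.mk (Ideal.span { p : MvPolynomial ℤ k |
      ∃ m n : ℤ, p = MvPolynomial.X n ^ 2 + (n : MvPolynomial ℤ k)
        - MvPolynomial.X m ^ 2 - (m : MvPolynomial ℤ k) })
      (MvPolynomial.X n ^ 2 + (n : MvPolynomial ℤ k) - MvPolynomial.X 0 ^ 2
        - ((0 : ℤ) : MvPolynomial ℤ k)) = 0 :=
    Ideal.Quotient.eq_zero_iff_mem.2 (Ideal.subset_span ⟨0, n, rfl⟩)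
  simp only [map_sub, map_add, map_pow, map_intCast, Int.cast_zero, sub_zero] at hrel
  unfold xC
  linear_combination hrel

lemma polyC_intRootsPoly (S : Finset ℤ) : polyC k (intRootsPoly k S) = xS k S ^ 2 := by
  rw [polyC, intRootsPoly, xS, map_prod, ← Finset.prod_pow]
  refine Finset.prod_congr rfl fun i _ => ?_
  rw [xC_sq k i, map_sub, aeval_X, aeval_C, map_intCast]

variable {k}

lemma mem_Cgrade {K : Finset ℤ} {y : WeylC k} :
    y ∈ Cgrade k K ↔ ∃ g : k[X], polyC k g * xS k K = y := by
  simp [Cgrade, Cphi, polyC, Algebra.adjoin_singleton_eq_range_aeval]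

lemma xS_mem_Cgrade (K : Finset ℤ) : xS k K ∈ Cgrade k K :=
  mem_Cgrade.2 ⟨1, by simp⟩

lemma polyC_mul_mem_Cgrade (g : k[X]) {K : Finset ℤ} {y : WeylC k} (hy : y ∈ Cgrade k K) :
    polyC k g * y ∈ Cgrade k K := by
  obtain ⟨h, rfl⟩ := mem_Cgrade.1 hy
  exact mem_Cgrade.2 ⟨g * h, by rw [map_mul, mul_assoc]⟩

section Points

variable {L : Type*} [Field L] [Algebra k L]

variable (k) in
lemma exists_algHom_xC_zero_sq_eq [IsAlgClosed L] (τ : L) :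
    ∃ φ : WeylC k →ₐ[k] L, φ (xC k 0) ^ 2 = τ := by
  choose r hr using fun n : ℤ => IsAlgClosed.exists_pow_nat_eq (τ - n) two_pos
  refine ⟨Ideal.Quotient.liftₐ _ (MvPolynomial.aeval r) fun a ha => ?_, ?_⟩
  · refine (Ideal.span_le (I := RingHom.ker (MvPolynomial.aeval r))).2 ?_ ha
    rintro _ ⟨m, n, rfl⟩
    simp [RingHom.mem_ker, hr]
  · change MvPolynomial.aeval r (MvPolynomial.X 0) ^ 2 = τ
    simp [hr]

variable (φ : WeylC k →ₐ[k] L)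

lemma algHom_polyC (g : k[X]) : φ (polyC k g) = aeval (φ (xC k 0) ^ 2) g := by
  rw [polyC, ← aeval_algHom_apply, map_pow]

lemma algHom_xS_eq_zero_iff (S : Finset ℤ) :
    φ (xS k S) = 0 ↔ ∃ i ∈ S, φ (xC k 0) ^ 2 = i := by
  have hx (i : ℤ) : φ (xC k i) = 0 ↔ φ (xC k 0) ^ 2 = i := by
    rw [← sq_eq_zero_iff, ← map_pow, xC_sq, map_sub, map_pow, map_intCast, sub_eq_zero]
  simp only [xS, map_prod, Finset.prod_eq_zero_iff, hx]

end Points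

-- Evaluate at a generic point, where `x_0²` is transcendental over `k`.
lemma eq_zero_of_polyC_mul_xS_eq_zero {g : k[X]} {S : Finset ℤ}
    (h : polyC k g * xS k S = 0) : g = 0 := by
  let τ : AlgebraicClosure (RatFunc k) := algebraMap (RatFunc k) _ RatFunc.X
  have hτ : Transcendental k τ :=
    (transcendental_algebraMap_iff (algebraMap (RatFunc k) _).injective).2 RatFunc.transcendental_X
  obtain ⟨φ, hφ⟩ := exists_algHom_xC_zero_sq_eq k τ
  have hS : φ (xS k S) ≠ 0 := by
    rw [Ne, algHom_xS_eq_zero_iff, hφ]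
    rintro ⟨i, -, hi⟩
    exact hτ (hi ▸ isAlgebraic_intCast i)
  have hg : aeval τ g = 0 := by
    rw [← hφ, ← algHom_polyC]
    exact (mul_eq_zero.1 (by rw [← map_mul, h, map_zero])).resolve_right hS
  exact transcendental_iff.1 hτ g hg

lemma polyC_mul_xS_mem_Cx_of_dvd {I J : Finset ℤ} {g : k[X]} (h : intRootsPoly k (J \ I) ∣ g) :
    polyC k g * xS k I ∈ Cx k J := by
  obtain ⟨g, rfl⟩ := h
  have hinter : xS k (J ∩ I) ∣ xS k I :=
    Finset.prod_dvd_prod_of_subset _ _ _ Finset.inter_subset_right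
  have hJ : xS k J = xS k (J ∩ I) * xS k (J \ I) := (Finset.prod_inter_mul_prod_sdiff J I _).symm
  rw [Cx, Ideal.mem_span_singleton, map_mul, polyC_intRootsPoly, hJ]
  exact (mul_dvd_mul hinter (dvd_pow_self _ two_ne_zero)).trans ⟨polyC k g, by ring⟩

end WeylC

section CharZero

variable {k}

-- At a point with `x_i² = 0` and `i ∈ J \ I`, `x_J` vanishes but `x_I` does not.
lemma polyC_mul_xS_mem_Cx_iff {I J : Finset ℤ} {g : k[X]} :
    polyC k g * xS k I ∈ Cx k J ↔ intRootsPoly k (J \ I) ∣ g := by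
  refine ⟨fun h => intRootsPoly_dvd_of_eval_eq_zero fun i hi => ?_, polyC_mul_xS_mem_Cx_of_dvd⟩
  obtain ⟨hiJ, hiI⟩ := Finset.mem_sdiff.1 hi
  obtain ⟨b, hb⟩ := Ideal.mem_span_singleton'.1 h
  obtain ⟨φ, hφ⟩ := exists_algHom_xC_zero_sq_eq k (i : AlgebraicClosure k)
  have hJ : φ (xS k J) = 0 := (algHom_xS_eq_zero_iff φ J).2 ⟨i, hiJ, hφ⟩
  have hI : φ (xS k I) ≠ 0 := by
    rw [Ne, algHom_xS_eq_zero_iff, hφ]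
    rintro ⟨j, hj, hij⟩
    exact hiI (Int.cast_injective hij ▸ hj)
  have hg : φ (polyC k g) = 0 := by
    refine (mul_eq_zero.1 ?_).resolve_right hI
    rw [← map_mul, ← hb, map_mul, hJ, mul_zero]
  have hcast : (i : AlgebraicClosure k) = algebraMap k _ (i : k) := (map_intCast _ i).symm
  rwa [algHom_polyC, hφ, hcast, aeval_algebraMap_apply, map_eq_zero, coe_aeval_eq_eval] at hg

end CharZero

section GradedMaps

variable {k} {ι ι' ι'' : Type*} {I : ι → Finset ℤ} {I' : ι' → Finset ℤ} {I'' : ι'' → Finset ℤ}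

/-- A map `⨁ Cx_{I_s} → ⨁ Cx_{I'_t}` of finite direct sums, written as products, is graded if it
sends the homogeneous component of each degree `K` into that of degree `K`. -/
def IsGraded (f : (∀ s, Cx k (I s)) → ∀ t, Cx k (I' t)) : Prop :=
  ∀ (K : Finset ℤ) (p : ∀ s, Cx k (I s)), (∀ s, (p s : WeylC k) ∈ Cgrade k K) →
    ∀ t, (f p t : WeylC k) ∈ Cgrade k K

/-- The map `f` is multiplication by the matrix `M`, whose entries are polynomials standing for
elements of `C_∅` through `polyC`. -/
def ActsBy [Fintype ι] (f : (∀ s, Cx k (I s)) → ∀ t, Cx k (I' t)) (M : Matrix ι' ι k[X]) : Prop :=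
  ∀ p t, (f p t : WeylC k) = ∑ s, polyC k (M t s) * p s

/-- The generator `x_I` of the ideal `Cx_I`. -/
def cxGen (I : Finset ℤ) : Cx k I := ⟨xS k I, Ideal.mem_span_singleton_self _⟩

omit [CharZero k]

lemma exists_smul_cxGen_eq {I : Finset ℤ} (y : Cx k I) : ∃ r : WeylC k, r • cxGen I = y := by
  obtain ⟨r, hr⟩ := Ideal.mem_span_singleton'.1 y.2
  exact ⟨r, Subtype.ext hr⟩

lemma coe_single_cxGen [DecidableEq ι] (s t : ι) :
    ((Pi.single s (cxGen (I s)) : ∀ s, Cx k (I s)) t : WeylC k) =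
      if t = s then xS k (I s) else 0 := by
  split_ifs with h
  · subst h
    simp [cxGen]
  · simp [h]

lemma ActsBy.isGraded [Fintype ι] {f : (∀ s, Cx k (I s)) → ∀ t, Cx k (I' t)}
    {M : Matrix ι' ι k[X]} (hf : ActsBy f M) : IsGraded f := fun K p hp t => by
  rw [hf]
  exact sum_mem fun s _ => polyC_mul_mem_Cgrade _ (hp s)

lemma ActsBy.apply_single [Fintype ι] [DecidableEq ι] {f : (∀ s, Cx k (I s)) → ∀ t, Cx k (I' t)}
    {M : Matrix ι' ι k[X]} (hf : ActsBy f M) (s : ι) (t : ι') :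
    (f (Pi.single s (cxGen (I s))) t : WeylC k) = polyC k (M t s) * xS k (I s) := by
  simp [hf _ t, coe_single_cxGen]

lemma ActsBy.comp [Fintype ι] [Fintype ι'] {f : (∀ s, Cx k (I s)) → ∀ t, Cx k (I' t)}
    {g : (∀ t, Cx k (I' t)) → ∀ u, Cx k (I'' u)} {M : Matrix ι' ι k[X]} {N : Matrix ι'' ι' k[X]}
    (hg : ActsBy g N) (hf : ActsBy f M) : ActsBy (g ∘ f) (N * M) := fun p u => by
  simp only [Function.comp_apply, hg _ u, hf p, Matrix.mul_apply, map_sum, map_mul,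
    Finset.mul_sum, Finset.sum_mul, mul_assoc]
  exact Finset.sum_comm

lemma actsBy_id_iff [Fintype ι] [DecidableEq ι] {M : Matrix ι ι k[X]} :
    ActsBy (id : (∀ s, Cx k (I s)) → ∀ s, Cx k (I s)) M ↔ M = 1 := by
  refine ⟨fun h => ?_, fun h p t => by simp [h, Matrix.one_apply, apply_ite (polyC k)]⟩
  ext1 t s
  refine sub_eq_zero.1 (eq_zero_of_polyC_mul_xS_eq_zero (S := I s) ?_)
  rw [map_sub, sub_mul, ← h.apply_single, id, coe_single_cxGen, Matrix.one_apply]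
  split_ifs <;> simp

lemma ActsBy.ext [Fintype ι] {f g : (∀ s, Cx k (I s)) → ∀ t, Cx k (I' t)} {M : Matrix ι' ι k[X]}
    (hf : ActsBy f M) (hg : ActsBy g M) : f = g := by
  funext p t
  exact Subtype.ext ((hf p t).trans (hg p t).symm)

lemma IsGraded.exists_actsBy [Fintype ι] {f : (∀ s, Cx k (I s)) →ₗ[WeylC k] ∀ t, Cx k (I' t)}
    (hf : IsGraded f) : ∃ M : Matrix ι' ι k[X], ActsBy f M := by
  classical
  have hgen (s : ι) (t : ι') :
      ∃ g : k[X], polyC k g * xS k (I s) = f (Pi.single s (cxGen (I s))) t := by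
    refine mem_Cgrade.1 (hf (I s) _ (fun s' => ?_) t)
    rw [coe_single_cxGen]
    split_ifs
    exacts [xS_mem_Cgrade _, zero_mem _]
  choose M hM using hgen
  refine ⟨fun t s => M s t, fun p t => ?_⟩
  choose r hr using fun s => exists_smul_cxGen_eq (p s)
  have hp : p = ∑ s, r s • Pi.single s (cxGen (I s)) := by
    conv_lhs => rw [← Finset.univ_sum_single p]
    refine Finset.sum_congr rfl fun s _ => ?_
    rw [← hr]
    exact Pi.single_smul (f := fun s => Cx k (I s)) s (r s) _
  calc
    (f p t : WeylC k) = ∑ s, r s * f (Pi.single s (cxGen (I s))) t := by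
      conv_lhs => rw [hp]
      simp
    _ = ∑ s, polyC k (M s t) * p s := by
      refine Finset.sum_congr rfl fun s _ => ?_
      rw [← hM, ← hr, Submodule.coe_smul, smul_eq_mul, cxGen]
      ring

lemma exists_actsBy_of_dvd [Fintype ι] (M : Matrix ι' ι k[X])
    (hM : ∀ t s, intRootsPoly k (I' t \ I s) ∣ M t s) :
    ∃ f : (∀ s, Cx k (I s)) →ₗ[WeylC k] ∀ t, Cx k (I' t), ActsBy f M := by
  have hmem (p : ∀ s, Cx k (I s)) (t : ι') : ∑ s, polyC k (M t s) * p s ∈ Cx k (I' t) := by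
    refine sum_mem fun s _ => ?_
    obtain ⟨r, hr⟩ := exists_smul_cxGen_eq (p s)
    rw [← hr, Submodule.coe_smul, smul_eq_mul, mul_left_comm]
    exact Ideal.mul_mem_left _ r (polyC_mul_xS_mem_Cx_of_dvd (hM t s))
  refine ⟨{ toFun := fun p t => ⟨_, hmem p t⟩, map_add' := fun p q => ?_,
            map_smul' := fun r p => ?_ }, fun _ _ => rfl⟩
  · ext t
    simp [mul_add, Finset.sum_add_distrib]
  · ext t
    simp [Finset.mul_sum, mul_left_comm]

end GradedMaps

section GradedEquivs

variable {k} {ι ι' : Type*} [Fintype ι] [Fintype ι'] {I : ι → Finset ℤ} {I' : ι' → Finset ℤ}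

omit [Fintype ι'] in
lemma ActsBy.intRootsPoly_dvd {f : (∀ s, Cx k (I s)) → ∀ t, Cx k (I' t)} {M : Matrix ι' ι k[X]}
    (hf : ActsBy f M) (t : ι') (s : ι) : intRootsPoly k (I' t \ I s) ∣ M t s := by
  classical
  rw [← polyC_mul_xS_mem_Cx_iff, ← hf.apply_single]
  exact Subtype.prop _

theorem exists_gradedEquiv_iff_exists_matrix [DecidableEq ι] [DecidableEq ι'] :
    (∃ e : (∀ s, Cx k (I s)) ≃ₗ[WeylC k] ∀ t, Cx k (I' t), IsGraded e ∧ IsGraded e.symm) ↔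
      ∃ (M : Matrix ι' ι k[X]) (N : Matrix ι ι' k[X]), M * N = 1 ∧ N * M = 1 ∧
        (∀ t s, intRootsPoly k (I' t \ I s) ∣ M t s) ∧
        ∀ s t, intRootsPoly k (I s \ I' t) ∣ N s t := by
  constructor
  · rintro ⟨e, he, he'⟩
    obtain ⟨M, hM⟩ := IsGraded.exists_actsBy (f := e.toLinearMap) he
    obtain ⟨N, hN⟩ := IsGraded.exists_actsBy (f := e.symm.toLinearMap) he'
    have hMN : ActsBy id (M * N) := fun p => by simpa using (hM.comp hN) p
    have hNM : ActsBy id (N * M) := fun p => by simpa using (hN.comp hM) p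
    exact ⟨M, N, actsBy_id_iff.1 hMN, actsBy_id_iff.1 hNM, hM.intRootsPoly_dvd, hN.intRootsPoly_dvd⟩
  · rintro ⟨M, N, hMN, hNM, hM, hN⟩
    obtain ⟨f, hf⟩ := exists_actsBy_of_dvd M hM
    obtain ⟨g, hg⟩ := exists_actsBy_of_dvd N hN
    have hfg : f ∘ g = id := (hf.comp hg).ext (actsBy_id_iff.2 hMN)
    have hgf : g ∘ f = id := (hg.comp hf).ext (actsBy_id_iff.2 hNM)
    exact ⟨.ofLinearMap f g (LinearMap.coe_injective hfg) (LinearMap.coe_injective hgf),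
      hf.isGraded, hg.isGraded⟩

omit [CharZero k] in
lemma card_notMem_le_of_mul_eq_one [DecidableEq ι] {M : Matrix ι' ι k[X]} {N : Matrix ι ι' k[X]}
    (hNM : N * M = 1) (hM : ∀ t s, intRootsPoly k (I' t \ I s) ∣ M t s) (i : ℤ) :
    Fintype.card {s // i ∉ I s} ≤ Fintype.card {t // i ∉ I' t} := by
  have heval : N.map (evalRingHom (i : k)) * M.map (evalRingHom (i : k)) = 1 := by
    rw [← Matrix.map_mul, hNM, Matrix.map_one _ (map_zero _) (map_one _)]
  refine card_subtype_le_of_mul_eq_one heval fun t s ht hs => ?_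
  exact eval_eq_zero_of_intRootsPoly_dvd (Finset.mem_sdiff.2 ⟨not_not.1 ht, hs⟩) (hM t s)

theorem card_notMem_eq_of_gradedEquiv (e : (∀ s, Cx k (I s)) ≃ₗ[WeylC k] ∀ t, Cx k (I' t))
    (he : IsGraded e) (he' : IsGraded e.symm) (i : ℤ) :
    Fintype.card {s // i ∉ I s} = Fintype.card {t // i ∉ I' t} := by
  classical
  obtain ⟨M, N, hMN, hNM, hM, hN⟩ := exists_gradedEquiv_iff_exists_matrix.1 ⟨e, he, he'⟩
  exact (card_notMem_le_of_mul_eq_one hNM hM i).antisymm (card_notMem_le_of_mul_eq_one hMN hN i)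

end GradedEquivs

section Pairs

variable {k} {I J I' J' : Finset ℤ}

lemma isCoprime_intRootsPoly_mul_of_union_eq_of_inter_eq (hU : I ∪ J = I' ∪ J')
    (hN : I ∩ J = I' ∩ J') :
    IsCoprime (intRootsPoly k (I' \ I) * intRootsPoly k (J' \ J))
      (intRootsPoly k (I' \ J) * intRootsPoly k (J' \ I)) := by
  have hI' : I' ⊆ I ∪ J := hU ▸ Finset.subset_union_left
  have hJ' : J' ⊆ J ∪ I := Finset.union_comm I J ▸ hU ▸ Finset.subset_union_right
  have hI : I' ∩ J' ⊆ I := hN ▸ Finset.inter_subset_left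
  have hJ : J' ∩ I' ⊆ J := Finset.inter_comm I' J' ▸ hN ▸ Finset.inter_subset_right
  refine .mul_left (.mul_right ?_ ?_) (.mul_right ?_ ?_) <;> apply isCoprime_intRootsPoly
  · exact disjoint_sdiff_sdiff_of_subset_union hI'
  · exact disjoint_sdiff_sdiff_of_inter_subset hI
  · exact disjoint_sdiff_sdiff_of_inter_subset hJ
  · exact disjoint_sdiff_sdiff_of_subset_union hJ'

theorem exists_gradedEquiv_of_union_eq_of_inter_eq (hU : I ∪ J = I' ∪ J') (hN : I ∩ J = I' ∩ J') :
    ∃ e : (∀ s, Cx k (![I, J] s)) ≃ₗ[WeylC k] ∀ t, Cx k (![I', J'] t),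
      IsGraded e ∧ IsGraded e.symm := by
  have hU' : I ∪ J = J' ∪ I' := hU.trans (Finset.union_comm _ _)
  have hN' : I ∩ J = J' ∩ I' := hN.trans (Finset.inter_comm _ _)
  have hII' : I \ I' = J' \ J := sdiff_eq_sdiff_of_union_eq_of_inter_eq hU hN
  have hIJ' : I \ J' = I' \ J := sdiff_eq_sdiff_of_union_eq_of_inter_eq hU' hN'
  have hJI' : J \ I' = J' \ I := (sdiff_eq_sdiff_of_union_eq_of_inter_eq hU'.symm hN'.symm).symm
  have hJJ' : J \ J' = I' \ I := (sdiff_eq_sdiff_of_union_eq_of_inter_eq hU.symm hN.symm).symm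
  obtain ⟨M, N, hMN, hNM, hM, hN⟩ := exists_mul_eq_one_and_dvd_of_isCoprime
    (isCoprime_intRootsPoly_mul_of_union_eq_of_inter_eq (k := k) hU hN)
  refine exists_gradedEquiv_iff_exists_matrix.2 ⟨M, N, hMN, hNM, ?_, ?_⟩
  · simpa [Fin.forall_fin_two] using hM
  · simpa [Fin.forall_fin_two, hII', hIJ', hJI', hJJ'] using hN

variable (k I J) in
/-- The identification of `Cx_I ⊕ Cx_J`, as a binary product, with the direct sum of the family
`![I, J]`. -/
def cxPairEquiv : (∀ s, Cx k (![I, J] s)) ≃ₗ[WeylC k] Cx k I × Cx k J :=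
  LinearEquiv.piFinTwo (WeylC k) fun s => Cx k (![I, J] s)

omit [CharZero k] in
lemma isGraded_iff_of_semiconj_cxPairEquiv
    {f : (∀ s, Cx k (![I, J] s)) → ∀ t, Cx k (![I', J'] t)}
    {g : Cx k I × Cx k J → Cx k I' × Cx k J'}
    (h : ∀ p, cxPairEquiv k I' J' (f p) = g (cxPairEquiv k I J p)) :
    IsGraded f ↔ ∀ (K : Finset ℤ) (p : Cx k I × Cx k J),
      (p.1 : WeylC k) ∈ Cgrade k K → (p.2 : WeylC k) ∈ Cgrade k K →
      ((g p).1 : WeylC k) ∈ Cgrade k K ∧ ((g p).2 : WeylC k) ∈ Cgrade k K := by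
  simp only [(cxPairEquiv k I J).surjective.forall, ← h, IsGraded, Fin.forall_fin_two, and_imp]
  rfl

end Pairs

/-- `Cx_I ⊕ Cx_J ≅ Cx_{I'} ⊕ Cx_{J'}` as `ℤ_fin`-graded
`C`-modules (a `C`-linear equivalence preserving homogeneous components in both
directions) if and only if `I ∪ J = I' ∪ J'` and `I ∩ J = I' ∩ J'`. -/
theorem cx_sum_iso_iff (I J I' J' : Finset ℤ) :
    (∃ e : (↥(Cx k I) × ↥(Cx k J)) ≃ₗ[WeylC k] (↥(Cx k I') × ↥(Cx k J')),
      (∀ (K : Finset ℤ) (p : ↥(Cx k I) × ↥(Cx k J)),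
        (p.1 : WeylC k) ∈ Cgrade k K → (p.2 : WeylC k) ∈ Cgrade k K →
        ((e p).1 : WeylC k) ∈ Cgrade k K ∧ ((e p).2 : WeylC k) ∈ Cgrade k K) ∧
      (∀ (K : Finset ℤ) (q : ↥(Cx k I') × ↥(Cx k J')),
        (q.1 : WeylC k) ∈ Cgrade k K → (q.2 : WeylC k) ∈ Cgrade k K →
        ((e.symm q).1 : WeylC k) ∈ Cgrade k K ∧ ((e.symm q).2 : WeylC k) ∈ Cgrade k K)) ↔
    I ∪ J = I' ∪ J' ∧ I ∩ J = I' ∩ J' := by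
  constructor
  · rintro ⟨e, he, he'⟩
    refine union_eq_and_inter_eq_of_card_notMem_eq <| card_notMem_eq_of_gradedEquiv
      (cxPairEquiv k I J ≪≫ₗ e ≪≫ₗ (cxPairEquiv k I' J').symm) ?_ ?_
    · exact (isGraded_iff_of_semiconj_cxPairEquiv (by simp)).2 he
    · exact (isGraded_iff_of_semiconj_cxPairEquiv (by simp)).2 he'
  · rintro ⟨hU, hN⟩
    obtain ⟨e, he, he'⟩ := exists_gradedEquiv_of_union_eq_of_inter_eq (k := k) hU hN
    refine ⟨(cxPairEquiv k I J).symm ≪≫ₗ e ≪≫ₗ cxPairEquiv k I' J', ?_, ?_⟩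
    · exact (isGraded_iff_of_semiconj_cxPairEquiv (by simp)).1 he
    · exact (isGraded_iff_of_semiconj_cxPairEquiv (by simp)).1 he'
end
end
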